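/- arXiv:1308.6650 — 2 statements merged into one kernel-verified Lean document; each statement's English description precedes it below -/
import Mathlib

section
/- Suppose |q a_1⁻¹⋯a_n⁻¹ b_1⁻¹⋯b_n⁻¹| < |t| < 1, set s := q t⁻¹ a_1⁻¹⋯a_n⁻¹ b_1⁻¹⋯b_n⁻¹, and let x ∈ (ℂ^*)ⁿ satisfy x_i b_j ∉ qᶻ and x_i a_j⁻¹ ∉ qᶻ for all 1 ≤ i, j ≤ n. Then the reflective equation holds: I(t;x) = (x_1⋯x_n)^{n−1} · ∏_{i=1}^n ∏_{j=1}^n [ θ(q a_j⁻¹ x_i) / θ(b_j x_i) ] · Ī(s; x⁻¹), where x⁻¹ := (x_1⁻¹,…,x_n⁻¹). (Connection between the Milne–Gustafson sum and its dual, Lemma 3.6 of the paper, written multiplicatively.) -/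
/-!
The identity holds term by term: the summand of `I(t;x)` at `ν` equals the prefactor times the
summand of `Ī(s;x⁻¹)` at `-ν`, so reindexing the lattice sum by `ν ↦ -ν` gives the theorem, and no
convergence of either series is needed.

With `X_i = x_i q^{ν_i}`, the definition of `θ` turns `(q X_i / a_j)_∞ / (b_j X_i)_∞` into
`θ(q X_i / a_j) / θ(b_j X_i)` times `(q / (b_j X_i))_∞ / (a_j / X_i)_∞`, the dual factor at `1 / X_i`
(`qp_ratio_reflect`). The quasi-periodicity `θ(q z) = -z⁻¹ θ(z)` makes the theta quotient equal to its
value at `x_i` times `(a_j b_j / q)^{ν_i}` (`th_ratio_zpow`). The difference product satisfies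
`X_j - X_i = X_i X_j (X_i⁻¹ - X_j⁻¹)`, which produces `(∏ X_i)^{n-1}` (`prod_Ioi_mul`). The powers
collected are `(t q⁻¹ ∏ a_j b_j)^{∑ ν_i} = s^{-∑ ν_i}`.
-/

open scoped BigOperators
open Finset

/-- The infinite q-Pochhammer symbol `(a)_∞ = ∏_{i=0}^∞ (1 - qⁱ a)`. -/
noncomputable def qp (q a : ℂ) : ℂ := ∏' i : ℕ, (1 - q ^ i * a)

/-- The theta function `θ(a) = (a)_∞ (q/a)_∞`. -/
noncomputable def th (q a : ℂ) : ℂ := qp q a * qp q (q / a)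

/-- Summand of the normalized Jackson integral of Milne–Gustafson type. -/
noncomputable def mgTerm {n : ℕ} (q t : ℂ) (a b x : Fin n → ℂ) (ν : Fin n → ℤ) : ℂ :=
  t ^ (∑ i, ν i) *
    (∏ i, ∏ j, qp q (q * (a j)⁻¹ * (x i * q ^ ν i)) / qp q (b j * (x i * q ^ ν i))) *
    ∏ i, ∏ j ∈ Finset.Ioi i, (x j * q ^ ν j - x i * q ^ ν i)

/-- The normalized Jackson integral of Milne–Gustafson type `I(t;x)`. -/
noncomputable def mgSum {n : ℕ} (q t : ℂ) (a b x : Fin n → ℂ) : ℂ :=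
  (1 - q) ^ n * ∑' ν : Fin n → ℤ, mgTerm q t a b x ν

/-- Summand of the normalized dual Jackson integral of Milne–Gustafson type. -/
noncomputable def mgDualTerm {n : ℕ} (q s : ℂ) (a b y : Fin n → ℂ) (ν : Fin n → ℤ) : ℂ :=
  s ^ (∑ i, ν i) *
    (∏ i, ∏ j, qp q (q * (b j)⁻¹ * (y i * q ^ ν i)) / qp q (a j * (y i * q ^ ν i))) *
    ∏ i, ∏ j ∈ Finset.Ioi i, (y i * q ^ ν i - y j * q ^ ν j)

/-- The normalized dual Jackson integral of Milne–Gustafson type `Ī(s;y)`. -/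
noncomputable def mgDualSum {n : ℕ} (q s : ℂ) (a b y : Fin n → ℂ) : ℂ :=
  (1 - q) ^ n * ∑' ν : Fin n → ℤ, mgDualTerm q s a b y ν

lemma summable_norm_qp {q : ℂ} (hq : ‖q‖ < 1) (z : ℂ) :
    Summable fun i : ℕ => ‖-(q ^ i * z)‖ := by
  simpa using (summable_geometric_of_lt_one (norm_nonneg q) hq).mul_right ‖z‖

lemma qp_step {q : ℂ} (hq : ‖q‖ < 1) (z : ℂ) : qp q z = (1 - z) * qp q (z * q) := by
  have hm : Multipliable fun i : ℕ => 1 - q ^ i * (z * q) := by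
    simpa [sub_eq_add_neg] using multipliable_one_add_of_summable (summable_norm_qp hq (z * q))
  have hshift : (fun i : ℕ => 1 - q ^ (i + 1) * z) = fun i => 1 - q ^ i * (z * q) := by
    funext i
    ring
  unfold qp
  rw [tprod_eq_zero_mul' (by rw [hshift]; exact hm), hshift]
  simp

lemma qp_ne_zero {q : ℂ} (hq : ‖q‖ < 1) {z : ℂ} (hz : ∀ m : ℤ, z ≠ q ^ m) :
    qp q z ≠ 0 := by
  have h := tprod_one_add_ne_zero_of_summable (f := fun i : ℕ => -(q ^ i * z)) (fun i h0 => by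
    apply hz (-(i : ℤ))
    have h1 : q ^ i * z = 1 := by linear_combination -h0
    rw [zpow_neg, zpow_natCast]
    exact eq_inv_of_mul_eq_one_right h1) (summable_norm_qp hq z)
  simpa [qp, sub_eq_add_neg] using h

/-- Quasi-periodicity of the theta function. -/
lemma th_step {q : ℂ} (hq0 : q ≠ 0) (hq : ‖q‖ < 1) {z : ℂ} (hz : z ≠ 0) :
    th q (z * q) = -z⁻¹ * th q z := by
  have h1 := qp_step hq z
  have h2 := qp_step hq z⁻¹
  have h3 : q / (z * q) = z⁻¹ := by field_simp
  have h4 : q / z = z⁻¹ * q := by field_simp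
  rw [th, th, h3, h4, h1, h2]
  field_simp
  ring

lemma th_ratio_step {q : ℂ} (hq0 : q ≠ 0) (hq : ‖q‖ < 1) {z w : ℂ} (hz : z ≠ 0) (hw : w ≠ 0) :
    th q (z * q) / th q (w * q) = w / z * (th q z / th q w) := by
  rw [th_step hq0 hq hz, th_step hq0 hq hw, neg_mul, neg_mul, neg_div_neg_eq, mul_div_mul_comm,
    inv_div_inv]

lemma th_ratio_zpow {q : ℂ} (hq0 : q ≠ 0) (hq : ‖q‖ < 1) {z w : ℂ} (hz : z ≠ 0) (hw : w ≠ 0)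
    (m : ℤ) :
    th q (z * q ^ m) / th q (w * q ^ m) = (w / z) ^ m * (th q z / th q w) := by
  have hstep : ∀ k : ℤ, th q (z * q ^ (k + 1)) / th q (w * q ^ (k + 1)) =
      w / z * (th q (z * q ^ k) / th q (w * q ^ k)) := fun k => by
    have hk : q ^ k ≠ 0 := zpow_ne_zero k hq0
    rw [zpow_add_one₀ hq0, ← mul_assoc, ← mul_assoc,
      th_ratio_step hq0 hq (mul_ne_zero hz hk) (mul_ne_zero hw hk), mul_div_mul_right _ _ hk]
  have hc : w / z ≠ 0 := div_ne_zero hw hz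
  induction m using Int.induction_on with
  | zero => simp
  | succ k ih => rw [hstep, ih, zpow_add_one₀ hc]; ring
  | pred k ih =>
    have h := hstep (-(k : ℤ) - 1)
    rw [sub_add_cancel, ih] at h
    apply mul_left_cancel₀ hc
    rw [← h, zpow_sub_one₀ hc]
    field_simp

/-- Reflection `ν ↦ -ν`, `x ↦ x⁻¹` for one factor of the summand. -/
lemma qp_ratio_reflect {q : ℂ} (hq0 : q ≠ 0) (hq : ‖q‖ < 1) {a b x : ℂ} (ha : a ≠ 0) (hb : b ≠ 0)
    (hx : x ≠ 0) (hxb : ∀ m : ℤ, x * b ≠ q ^ m) (hxa : ∀ m : ℤ, x * a⁻¹ ≠ q ^ m) (m : ℤ) :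
    qp q (q * a⁻¹ * (x * q ^ m)) / qp q (b * (x * q ^ m)) =
      th q (q * a⁻¹ * x) / th q (b * x) * (a * b / q) ^ m *
        (qp q (q * b⁻¹ * (x⁻¹ * q ^ (-m))) / qp q (a * (x⁻¹ * q ^ (-m)))) := by
  have hqm : q ^ m ≠ 0 := zpow_ne_zero m hq0
  have hA : qp q (a * (x⁻¹ * q ^ (-m))) ≠ 0 := qp_ne_zero hq fun k hk => by
    apply hxa (-m - k)
    rw [sub_eq_add_neg, zpow_add₀ hq0, zpow_neg q k, ← hk, zpow_neg]
    field_simp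
  have hB : qp q (q * b⁻¹ * (x⁻¹ * q ^ (-m))) ≠ 0 := qp_ne_zero hq fun k hk => by
    apply hxb (1 + -m + -k)
    rw [zpow_add₀ hq0, zpow_add₀ hq0, zpow_neg q k, ← hk, zpow_neg, zpow_one]
    field_simp
  have h := th_ratio_zpow hq0 hq (z := q * a⁻¹ * x) (w := b * x)
    (mul_ne_zero (mul_ne_zero hq0 (inv_ne_zero ha)) hx) (mul_ne_zero hb hx) m
  have e1 : b * x / (q * a⁻¹ * x) = a * b / q := by field_simp
  have e2 : q / (q * a⁻¹ * x * q ^ m) = a * (x⁻¹ * q ^ (-m)) := by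
    rw [zpow_neg]; field_simp
  have e3 : q / (b * x * q ^ m) = q * b⁻¹ * (x⁻¹ * q ^ (-m)) := by
    rw [zpow_neg]; field_simp
  rw [mul_comm (th q (q * a⁻¹ * x) / th q (b * x)), ← e1, ← h, th, th, e2, e3, mul_assoc _ x,
    mul_assoc b]
  rw [mul_div_mul_comm, mul_assoc (_ / _), div_mul_div_cancel₀ hB, div_self hA, mul_one]

lemma prod_zpow_eq {ι : Type*} [Fintype ι] {c : ℂ} (hc : c ≠ 0) (ν : ι → ℤ) :
    ∏ i, c ^ ν i = c ^ ∑ i, ν i := by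
  classical
  induction (univ : Finset ι) using Finset.induction_on with
  | empty => simp
  | insert i s hi ih => rw [prod_insert hi, sum_insert hi, zpow_add₀ hc, ih]

lemma prod_Ioi_mul {n : ℕ} (X : Fin n → ℂ) :
    ∏ i, ∏ j ∈ Ioi i, X i * X j = (∏ i, X i) ^ (n - 1) := by
  rw [prod_prod_Ioi_mul_eq_prod_prod_off_diag (fun _ j : Fin n => X j)]
  simp [prod_pow, card_compl]

lemma mgTerm_reflect {q : ℂ} (hq0 : q ≠ 0) (hq : ‖q‖ < 1) {n : ℕ} (hn : 1 ≤ n)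
    (a b : Fin n → ℂ) (ha : ∀ i, a i ≠ 0) (hb : ∀ i, b i ≠ 0) (t : ℂ)
    (x : Fin n → ℂ) (hx : ∀ i, x i ≠ 0)
    (hxb : ∀ i j, ∀ m : ℤ, x i * b j ≠ q ^ m) (hxa : ∀ i j, ∀ m : ℤ, x i * (a j)⁻¹ ≠ q ^ m)
    (s : ℂ) (hs : s = q * t⁻¹ * (∏ i, a i)⁻¹ * (∏ i, b i)⁻¹) (ν : Fin n → ℤ) :
    mgTerm q t a b x ν =
      (∏ i, x i) ^ (n - 1) * (∏ i, ∏ j, th q (q * (a j)⁻¹ * x i) / th q (b j * x i)) *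
        mgDualTerm q s a b (fun i => (x i)⁻¹) (-ν) := by
  have hV : ∏ i, ∏ j ∈ Ioi i, (x j * q ^ ν j - x i * q ^ ν i) =
      ((∏ i, x i) ^ (n - 1) * (q ^ (n - 1)) ^ (∑ i, ν i)) *
        ∏ i, ∏ j ∈ Ioi i, ((x i)⁻¹ * q ^ (-ν i) - (x j)⁻¹ * q ^ (-ν j)) := by
    have hpow : (∏ i, x i) ^ (n - 1) * (q ^ (n - 1)) ^ (∑ i, ν i) =
        ∏ i, ∏ j ∈ Ioi i, (x i * q ^ ν i) * (x j * q ^ ν j) := by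
      rw [prod_Ioi_mul, prod_mul_distrib, mul_pow, prod_zpow_eq hq0]
      congr 1
      rw [← zpow_natCast, ← zpow_natCast, ← zpow_mul, ← zpow_mul, mul_comm]
    rw [hpow, ← prod_mul_distrib]
    refine prod_congr rfl fun i _ => ?_
    rw [← prod_mul_distrib]
    refine prod_congr rfl fun j _ => ?_
    have h1 := hx i
    have h2 := hx j
    have h3 : q ^ ν i ≠ 0 := zpow_ne_zero _ hq0
    have h4 : q ^ ν j ≠ 0 := zpow_ne_zero _ hq0
    rw [zpow_neg, zpow_neg]
    field_simp
  have hP : ∏ i, ∏ j, qp q (q * (a j)⁻¹ * (x i * q ^ ν i)) / qp q (b j * (x i * q ^ ν i)) =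
      (∏ i, ∏ j, th q (q * (a j)⁻¹ * x i) / th q (b j * x i)) *
        ((∏ j, a j) * (∏ j, b j) / q ^ n) ^ (∑ i, ν i) *
        ∏ i, ∏ j, qp q (q * (b j)⁻¹ * ((x i)⁻¹ * q ^ (-ν i))) /
          qp q (a j * ((x i)⁻¹ * q ^ (-ν i))) := by
    have hc : (∏ j, a j) * (∏ j, b j) / q ^ n ≠ 0 :=
      div_ne_zero (mul_ne_zero (prod_ne_zero_iff.2 fun j _ => ha j)
        (prod_ne_zero_iff.2 fun j _ => hb j)) (pow_ne_zero _ hq0)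
    rw [← prod_zpow_eq hc, ← prod_mul_distrib, ← prod_mul_distrib]
    refine prod_congr rfl fun i _ => ?_
    have hpow : ((∏ j, a j) * (∏ j, b j) / q ^ n) ^ ν i = ∏ j, (a j * b j / q) ^ ν i := by
      rw [prod_zpow, prod_div_distrib, prod_mul_distrib]
      simp
    rw [hpow, ← prod_mul_distrib, ← prod_mul_distrib]
    exact prod_congr rfl fun j _ =>
      qp_ratio_reflect hq0 hq (ha j) (hb j) (hx i) (hxb i j) (hxa i j) (ν i)
  have hS : s ^ (∑ i, (-ν) i) = t ^ (∑ i, ν i) *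
      ((∏ j, a j) * (∏ j, b j) / q ^ n) ^ (∑ i, ν i) * (q ^ (n - 1)) ^ (∑ i, ν i) := by
    have hneg : ∑ i, (-ν) i = -∑ i, ν i := by simp
    rw [hneg, ← mul_zpow, ← mul_zpow, zpow_neg, ← inv_zpow, hs]
    congr 1
    obtain ⟨k, rfl⟩ : ∃ k, n = k + 1 := ⟨n - 1, by omega⟩
    have : q ^ k ≠ 0 := pow_ne_zero _ hq0
    rw [Nat.add_sub_cancel, pow_succ]
    simp only [mul_inv, inv_inv]
    field_simp
  rw [mgTerm, mgDualTerm, hV, hP, hS]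
  simp only [Pi.neg_apply]
  ring

/-- Reflective equation relating the Milne–Gustafson sum and its dual. -/
theorem milne_gustafson_reflective_equation
    (q : ℝ) (hq0 : 0 < q) (hq1 : q < 1) (n : ℕ) (hn : 1 ≤ n)
    (a b : Fin n → ℂ) (ha : ∀ i, a i ≠ 0) (hb : ∀ i, b i ≠ 0)
    (t : ℂ) (ht0 : t ≠ 0)
    (hlow : ‖(q : ℂ) * (∏ i, a i)⁻¹ * (∏ i, b i)⁻¹‖ < ‖t‖) (hupp : ‖t‖ < 1)
    (x : Fin n → ℂ) (hx : ∀ i, x i ≠ 0)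
    (hxb : ∀ i j, ∀ m : ℤ, x i * b j ≠ (q : ℂ) ^ m)
    (hxa : ∀ i j, ∀ m : ℤ, x i * (a j)⁻¹ ≠ (q : ℂ) ^ m)
    (s : ℂ) (hs : s = (q : ℂ) * t⁻¹ * (∏ i, a i)⁻¹ * (∏ i, b i)⁻¹) :
    mgSum (q : ℂ) t a b x =
      (∏ i, x i) ^ (n - 1) *
        (∏ i, ∏ j, th (q : ℂ) ((q : ℂ) * (a j)⁻¹ * x i) / th (q : ℂ) (b j * x i)) *
        mgDualSum (q : ℂ) s a b fun i => (x i)⁻¹ := by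
  have hqc : (q : ℂ) ≠ 0 := by exact_mod_cast hq0.ne'
  have hqn : ‖(q : ℂ)‖ < 1 := by
    rw [Complex.norm_real, Real.norm_of_nonneg hq0.le]
    exact hq1
  rw [mgSum, mgDualSum, tsum_congr (mgTerm_reflect hqc hqn hn a b ha hb t x hx hxb hxa s hs),
    tsum_mul_left]
  have hneg := (Equiv.neg (Fin n → ℤ)).tsum_eq (mgDualTerm (q : ℂ) s a b fun i => (x i)⁻¹)
  simp only [Equiv.neg_apply] at hneg
  rw [hneg]
  ring
end

section
/- Suppose |a_1⁻¹⋯a_n⁻¹ b_1⁻¹⋯b_n⁻¹| < |s| < 1 and that y_i a_j ∉ qᶻ for all 1 ≤ i, j ≤ n. Then Ī(s;y) = [(1 − s a_1⋯a_n b_1⋯b_n) / (b_1⋯b_n (1 − s))] · (y_1⋯y_n) · Ī(qs;y). (Recurrence for the dual Milne–Gustafson sum, Lemma 3.7 of the paper, written multiplicatively with s = q^β.) -/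
/-!
Write `z = y q^ν`, `w(z) = ∏_j (q z / b_j)_∞ / (a_j z)_∞`, and let `J_k(y) = ∑_{ν ∈ ℤ} s^ν w(z) z^k`
be the one-variable moments. Expanding the Vandermonde product as a determinant turns the
`n`-fold sums into determinants of moments, up to one common sign and the factor `(1 - q)ⁿ`:
`Ī(s;y)` corresponds to `det (J_k(y_i))` and `y_1⋯y_n Ī(qs;y)` to `det (J_{k+1}(y_i))`, with
`0 ≤ k < n` (`hasSum_det_mgMoment`, `mgDualTerm_eq`).

The functional equation `w(qz) ∏_j (1 - q z / b_j) = w(z) ∏_j (1 - a_j z)` (`mgWeight_shift`) and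
invariance of a bilateral sum under `ν ↦ ν + 1` give one linear relation among `J_0, …, J_n`
(`mgMoment_relation`). Its coefficients are those of
`∏_j (1 - a_j X) - s⁻¹ ∏_j (1 - X / b_j)`, with constant term `1 - s⁻¹` and leading term
`(-1)ⁿ (a_1⋯a_n - (s b_1⋯b_n)⁻¹)`. Modulo the columns `J_1, …, J_{n-1}` this expresses `J_0`
through `J_n`, and moving the column `J_n` to the end compares the two determinants (`det_shift`).

The moments `J_0, …, J_n` converge absolutely by the ratio test applied to the functional
equation at both ends (`summable_mgMomentTerm`). The ratio tends to `s q^k` as `ν → ∞` and to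
`q^{n-k} / (s a_1⋯a_n b_1⋯b_n)` as `ν → -∞`, so the hypotheses on `|s|` are used here.
-/

open scoped BigOperators
open Finset

open Filter Topology

/-! ### The weight function and its functional equation -/

lemma qp_shift {q : ℂ} (hq : ‖q‖ < 1) (x : ℂ) : qp q x = (1 - x) * qp q (q * x) := by
  have hm : Multipliable fun i : ℕ => 1 - q ^ (i + 1) * x := by
    have h : Summable fun i : ℕ => ‖-(q ^ (i + 1) * x)‖ := by
      have h1 := ((summable_geometric_of_lt_one (norm_nonneg q) hq).mul_right (‖q‖ * ‖x‖))
      refine h1.congr fun i => ?_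
      rw [norm_neg, norm_mul, norm_pow]; ring
    simpa [sub_eq_add_neg] using multipliable_one_add_of_summable h
  unfold qp
  rw [tprod_eq_zero_mul' (f := fun i : ℕ => 1 - q ^ i * x) hm, pow_zero, one_mul]
  refine congrArg _ (tprod_congr fun i => ?_)
  rw [pow_succ, mul_assoc]

/-- The one-variable weight `w(z) = ∏_j (q z / b_j)_∞ / (a_j z)_∞` of the dual Jackson integral. -/
noncomputable def mgWeight {n : ℕ} (q : ℂ) (a b : Fin n → ℂ) (z : ℂ) : ℂ :=
  ∏ j, qp q (q * (b j)⁻¹ * z) / qp q (a j * z)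

/-- The `q`-difference equation of the weight. Only the visible factors `1 - a_j z` have to be
nonzero: if some `(a_j q z)_∞` vanishes, both sides are zero through division by zero. -/
lemma mgWeight_shift {n : ℕ} {q : ℂ} (hq : ‖q‖ < 1) (a b : Fin n → ℂ) (z : ℂ)
    (hz : ∀ j, 1 - a j * z ≠ 0) :
    mgWeight q a b (q * z) * ∏ j, (1 - (b j)⁻¹ * (q * z)) =
      mgWeight q a b z * ∏ j, (1 - a j * z) := by
  unfold mgWeight
  rw [← Finset.prod_mul_distrib, ← Finset.prod_mul_distrib]
  refine Finset.prod_congr rfl fun j _ => ?_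
  have h1 : qp q (q * (b j)⁻¹ * z) =
      (1 - (b j)⁻¹ * (q * z)) * qp q (q * (b j)⁻¹ * (q * z)) := by
    rw [qp_shift hq]
    congr 2 <;> ring
  have h2 : qp q (a j * z) = (1 - a j * z) * qp q (a j * (q * z)) := by
    rw [qp_shift hq]
    congr 2; ring
  rw [h1, h2, div_mul_eq_mul_div, div_mul_eq_mul_div, mul_comm (1 - a j * z) (qp _ _),
    mul_div_mul_right _ _ (hz j), mul_comm]

/-! ### Product sums and determinants -/

/-- Fubini for a product of absolutely convergent bilateral series. Absolute summability is part
of the conclusion so that the induction on the number of factors goes through. -/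
lemma hasSum_pi_prod {m : ℕ} (f : Fin m → ℤ → ℂ) (hf : ∀ i, Summable fun k => ‖f i k‖) :
    (Summable fun ν : Fin m → ℤ => ‖∏ i, f i (ν i)‖) ∧
      HasSum (fun ν : Fin m → ℤ => ∏ i, f i (ν i)) (∏ i, ∑' k, f i k) := by
  induction m with
  | zero =>
    refine ⟨Summable.of_finite, ?_⟩
    simp
  | succ m ih =>
    obtain ⟨h1, h2⟩ := ih (fun i => f i.succ) fun i => hf i.succ
    have hn : Summable fun x : ℤ × (Fin m → ℤ) => ‖f 0 x.1 * ∏ i, f (Fin.succ i) (x.2 i)‖ :=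
      Summable.mul_norm (f := f 0) (g := fun ν : Fin m → ℤ => ∏ i, f (Fin.succ i) (ν i))
        (hf 0) h1
    have hs : HasSum (fun x : ℤ × (Fin m → ℤ) => f 0 x.1 * ∏ i, f (Fin.succ i) (x.2 i))
        ((∑' k, f 0 k) * ∏ i : Fin m, ∑' k, f i.succ k) := by
      rw [← h2.tsum_eq, tsum_mul_tsum_of_summable_norm (hf 0) h1]
      exact hn.of_norm.hasSum
    constructor
    · rw [← (Fin.consEquiv fun _ : Fin (m + 1) => ℤ).summable_iff]
      refine hn.congr fun x => ?_
      simp [Fin.consEquiv, Fin.prod_univ_succ]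
    · rw [← (Fin.consEquiv fun _ : Fin (m + 1) => ℤ).hasSum_iff, Fin.prod_univ_succ]
      convert! hs using 2 with x
      simp [Fin.consEquiv, Fin.prod_univ_succ]

/-- A linear relation `∑_{k ≤ m+1} c_k J_k = 0` between `m + 2` vectors of length `m + 1` compares
the determinants with columns `J_0, …, J_m` and `J_1, …, J_{m+1}`. -/
lemma det_shift {m : ℕ} (J : ℕ → Fin (m + 1) → ℂ) (c : ℕ → ℂ)
    (h : ∀ i, ∑ k ∈ Finset.range (m + 2), c k * J k i = 0) :
    c 0 * (Matrix.of fun i k : Fin (m + 1) => J k i).det =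
      (-1) ^ (m + 1) * c (m + 1) * (Matrix.of fun i k : Fin (m + 1) => J (k + 1) i).det := by
  set M := Matrix.of fun i k : Fin (m + 1) => J k i
  set N := Matrix.of fun i k : Fin (m + 1) => J (k + 1) i
  have h1 := Matrix.det_updateCol_sum M 0 (fun k => c k)
  have h2 : (fun i => ∑ k : Fin (m + 1), c k • M i k) = (-c (m + 1)) • J (m + 1) := by
    funext i
    have := h i
    rw [Finset.sum_range_succ, Finset.sum_range] at this
    simp only [M, Matrix.of_apply, smul_eq_mul, Pi.smul_apply]
    linear_combination this
  rw [h2, Matrix.det_updateCol_smul] at h1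
  -- The columns `J_{m+1}, J_1, …, J_m` are a cyclic rotation of `J_1, …, J_{m+1}`.
  have h3 : M.updateCol 0 (J (m + 1)) = N.submatrix id ((finRotate (m + 1))⁻¹ : Equiv.Perm (Fin (m + 1))) := by
    ext i k
    refine Fin.cases ?_ (fun k => ?_) k
    · have : (finRotate (m + 1))⁻¹ 0 = Fin.last m := by
        rw [Equiv.Perm.inv_eq_iff_eq, finRotate_last]
      rw [Matrix.submatrix_apply, this]
      simp [N]
    · have : (finRotate (m + 1))⁻¹ k.succ = k.castSucc := by
        rw [Equiv.Perm.inv_eq_iff_eq]; simp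
      rw [Matrix.submatrix_apply, this]
      simp [M, N]
  rw [h3, Matrix.det_permute', Equiv.Perm.sign_inv, sign_finRotate] at h1
  simp only [smul_eq_mul, Fin.val_zero, Nat.add_sub_cancel] at h1
  rw [← h1]
  push_cast
  ring

/-! ### The one-variable moments -/

/-- Ratio test in multiplicative form, which allows terms of `f` to vanish. -/
lemma summable_of_ratio_tendsto {f r : ℕ → ℂ} {L : ℂ} (hL : ‖L‖ < 1)
    (hr : Tendsto r atTop (𝓝 L)) (h : ∀ᶠ N in atTop, f (N + 1) = r N * f N) :
    Summable f := by
  obtain ⟨ρ, h1, h2⟩ := exists_between hL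
  refine summable_of_ratio_norm_eventually_le h2 ?_
  filter_upwards [h, hr.norm.eventually (gt_mem_nhds h1)] with N hN hN'
  rw [hN, norm_mul]
  exact mul_le_mul_of_nonneg_right hN'.le (norm_nonneg _)

/-- The summand `s^ν w(z) z^k`, with `z = y q^ν`, of the `k`-th moment `J_k(y)`. -/
noncomputable def mgMomentTerm {n : ℕ} (q s : ℂ) (a b : Fin n → ℂ) (y : ℂ) (k : ℕ) (ν : ℤ) : ℂ :=
  s ^ ν * mgWeight q a b (y * q ^ ν) * (y * q ^ ν) ^ k

/-- All moments up to order `n` converge. The lower bound on `|s|` is exactly what the highest one,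
`k = n`, needs as `ν → -∞`. -/
lemma summable_mgMomentTerm {n : ℕ} {q s y : ℂ} (hq0 : q ≠ 0) (hq : ‖q‖ < 1)
    {a b : Fin n → ℂ} (ha : ∀ j, a j ≠ 0) (hs0 : s ≠ 0) (hy : y ≠ 0)
    (hlow : ‖(∏ i, a i)⁻¹ * (∏ i, b i)⁻¹‖ < ‖s‖) (hupp : ‖s‖ < 1)
    (hya : ∀ j, ∀ ν : ℤ, 1 - a j * (y * q ^ ν) ≠ 0) {k : ℕ} (hk : k ≤ n) :
    Summable (mgMomentTerm q s a b y k) := by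
  have hpow : Tendsto (fun N : ℕ => q ^ N) atTop (𝓝 0) := tendsto_pow_atTop_nhds_zero_of_norm_lt_one hq
  apply Summable.of_nat_of_neg
  · have hz : Tendsto (fun N : ℕ => y * q ^ (N : ℤ)) atTop (𝓝 0) := by
      simpa using hpow.const_mul y
    have hQ : Tendsto (fun z : ℂ => ∏ j, (1 - (b j)⁻¹ * (q * z))) (𝓝 0) (𝓝 1) := by
      have : Continuous fun z : ℂ => ∏ j, (1 - (b j)⁻¹ * (q * z)) := by fun_prop
      simpa using this.tendsto 0
    have hP : Tendsto (fun z : ℂ => ∏ j, (1 - a j * z)) (𝓝 0) (𝓝 1) := by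
      have : Continuous fun z : ℂ => ∏ j, (1 - a j * z) := by fun_prop
      simpa using this.tendsto 0
    have hr := (((hP.div hQ one_ne_zero).const_mul (s * q ^ k)).comp hz)
    refine summable_of_ratio_tendsto ?_ hr ?_
    · rw [div_one, mul_one, norm_mul, norm_pow]
      exact (mul_le_of_le_one_right (norm_nonneg _)
        (pow_le_one₀ (norm_nonneg _) hq.le)).trans_lt hupp
    · filter_upwards [(hQ.comp hz).eventually_ne one_ne_zero] with N hN
      have hw := mgWeight_shift hq a b (y * q ^ (N : ℤ)) fun j => hya j N
      simp only [Function.comp_apply, Pi.div_apply] at hN ⊢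
      have e : y * q ^ ((N + 1 : ℕ) : ℤ) = q * (y * q ^ (N : ℤ)) := by
        push_cast; rw [zpow_add_one₀ hq0]; ring
      have e' : s ^ ((N + 1 : ℕ) : ℤ) = s * s ^ (N : ℤ) := by
        push_cast; rw [zpow_add_one₀ hs0]; ring
      unfold mgMomentTerm
      rw [e, e', eq_div_of_mul_eq hN hw]
      ring
  -- As `ν → -∞` the argument `z` tends to infinity, and the ratio is rewritten in `u = z⁻¹ → 0`.
  · have hu : Tendsto (fun N : ℕ => y⁻¹ * q ^ (N + 1)) atTop (𝓝 0) := by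
      simpa using (hpow.comp (tendsto_add_atTop_nat 1)).const_mul y⁻¹
    have hR : Tendsto (fun u : ℂ => ∏ j, ((u - (b j)⁻¹ * q) / (u - a j))) (𝓝 0)
        (𝓝 (∏ j, ((b j)⁻¹ * q / a j))) := by
      refine tendsto_finsetProd _ fun j _ => ?_
      have h1 : Tendsto (fun u : ℂ => u - (b j)⁻¹ * q) (𝓝 0) (𝓝 (0 - (b j)⁻¹ * q)) :=
        tendsto_id.sub_const _
      have h2 : Tendsto (fun u : ℂ => u - a j) (𝓝 0) (𝓝 (0 - a j)) := tendsto_id.sub_const _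
      have h3 := h1.div h2 (by simpa using ha j)
      rwa [zero_sub, zero_sub, neg_div_neg_eq] at h3
    have hr := ((hR.const_mul (s⁻¹ * (q⁻¹) ^ k)).comp hu)
    refine summable_of_ratio_tendsto ?_ hr (Eventually.of_forall fun N => ?_)
    · have hsn : 0 < ‖s‖ := norm_pos_iff.mpr hs0
      have e : s⁻¹ * q⁻¹ ^ k * ∏ j, ((b j)⁻¹ * q / a j) =
          s⁻¹ * ((∏ i, a i)⁻¹ * (∏ i, b i)⁻¹) * q ^ (n - k) := by
        rw [Finset.prod_div_distrib, Finset.prod_mul_distrib, Finset.prod_inv_distrib,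
          Finset.prod_const, Finset.card_univ, Fintype.card_fin, pow_sub₀ _ hq0 hk, inv_pow]
        ring
      rw [e, norm_mul, norm_pow]
      refine (mul_le_of_le_one_right (norm_nonneg _)
        (pow_le_one₀ (norm_nonneg _) hq.le)).trans_lt ?_
      rw [norm_mul, norm_inv, inv_mul_lt_iff₀ hsn, mul_one]
      exact hlow
    · have hw := mgWeight_shift hq a b (y * q ^ (-((N + 1 : ℕ) : ℤ))) fun j => hya j _
      set z := y * q ^ (-((N + 1 : ℕ) : ℤ)) with hz
      have hzu : y⁻¹ * q ^ (N + 1) = z⁻¹ := by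
        rw [hz, mul_inv, zpow_neg, inv_inv, zpow_natCast]
      have hz0 : z ≠ 0 := mul_ne_zero hy (zpow_ne_zero _ hq0)
      have e : y * q ^ (-(N : ℤ)) = q * z := by
        rw [hz]; push_cast; rw [neg_add, zpow_add₀ hq0]; field_simp
      have e' : s ^ (-((N + 1 : ℕ) : ℤ)) = s⁻¹ * s ^ (-(N : ℤ)) := by
        push_cast; rw [neg_add, zpow_add₀ hs0]; field_simp
      have hP : ∏ j, (1 - a j * z) ≠ 0 := Finset.prod_ne_zero_iff.mpr fun j _ => hya j _
      have hprod : ∏ j, ((z⁻¹ - (b j)⁻¹ * q) / (z⁻¹ - a j)) =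
          (∏ j, (1 - (b j)⁻¹ * (q * z))) / ∏ j, (1 - a j * z) := by
        rw [← Finset.prod_div_distrib]
        refine Finset.prod_congr rfl fun j _ => ?_
        rw [← mul_div_mul_right (z⁻¹ - (b j)⁻¹ * q) (z⁻¹ - a j) hz0, sub_mul, sub_mul,
          inv_mul_cancel₀ hz0]
        ring
      simp only [Function.comp_apply]
      unfold mgMomentTerm
      rw [hzu, hprod, e, ← hz, e', eq_div_of_mul_eq hP hw.symm, mul_pow q z k]
      have hqk : q⁻¹ ^ k * q ^ k = 1 := by rw [← mul_pow, inv_mul_cancel₀ hq0, one_pow]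
      linear_combination (-(s⁻¹ * s ^ (-(N : ℤ)) * (mgWeight q a b (q * z) *
        (∏ j, (1 - (b j)⁻¹ * (q * z))) / ∏ j, (1 - a j * z)) * z ^ k)) * hqk

/-- The polynomial `∏_j (1 - a_j X) - s⁻¹ ∏_j (1 - X / b_j)`, whose coefficients are those of the
linear relation between the moments. -/
noncomputable def mgRelPoly {n : ℕ} (s : ℂ) (a b : Fin n → ℂ) : Polynomial ℂ :=
  ∏ j, (1 - Polynomial.C (a j) * Polynomial.X) -
    Polynomial.C s⁻¹ * ∏ j, (1 - Polynomial.C (b j)⁻¹ * Polynomial.X)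

lemma natDegree_one_sub_le (c : ℂ) :
    (1 - Polynomial.C c * Polynomial.X : Polynomial ℂ).natDegree ≤ 1 := by
  compute_degree

lemma natDegree_prod_one_sub_le {n : ℕ} (c : Fin n → ℂ) :
    (∏ j, (1 - Polynomial.C (c j) * Polynomial.X : Polynomial ℂ)).natDegree ≤ n := by
  refine (Polynomial.natDegree_prod_le _ _).trans ?_
  refine (Finset.sum_le_card_nsmul _ _ 1 fun j _ => natDegree_one_sub_le (c j)).trans ?_
  simp

lemma natDegree_mgRelPoly_le {n : ℕ} (s : ℂ) (a b : Fin n → ℂ) :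
    (mgRelPoly s a b).natDegree ≤ n := by
  unfold mgRelPoly
  refine (Polynomial.natDegree_sub_le _ _).trans (max_le (natDegree_prod_one_sub_le a) ?_)
  exact (Polynomial.natDegree_C_mul_le _ _).trans (natDegree_prod_one_sub_le fun j => (b j)⁻¹)

lemma coeff_zero_mgRelPoly {n : ℕ} (s : ℂ) (a b : Fin n → ℂ) :
    (mgRelPoly s a b).coeff 0 = 1 - s⁻¹ := by
  rw [Polynomial.coeff_zero_eq_eval_zero]
  simp [mgRelPoly, Polynomial.eval_prod]

lemma coeff_top_mgRelPoly {n : ℕ} (s : ℂ) (a b : Fin n → ℂ) :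
    (mgRelPoly s a b).coeff n = (-1) ^ n * (∏ j, a j - s⁻¹ * (∏ j, b j)⁻¹) := by
  have h (c : Fin n → ℂ) :
      (∏ j, (1 - Polynomial.C (c j) * Polynomial.X : Polynomial ℂ)).coeff n =
        (-1) ^ n * ∏ j, c j := by
    have := Polynomial.coeff_prod_of_natDegree_le (s := Finset.univ)
      (fun j => 1 - Polynomial.C (c j) * Polynomial.X) 1 fun j _ => natDegree_one_sub_le (c j)
    rw [Finset.card_univ, Fintype.card_fin, mul_one] at this
    rw [this]
    simp [Polynomial.coeff_one, Finset.prod_neg]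
  rw [mgRelPoly, Polynomial.coeff_sub, Polynomial.coeff_C_mul, h, h fun j => (b j)⁻¹,
    Finset.prod_inv_distrib]
  ring

/-- The linear relation between the moments: `s^ν w(z) R(z)` with `R = mgRelPoly s a b` is, by the
functional equation, `s⁻¹ (G(ν+1) - G(ν))` for the summable `G(ν) = s^ν w(z) ∏_j (1 - z / b_j)`,
and so sums to zero. -/
lemma mgMoment_relation {n : ℕ} {q s y : ℂ} (hq0 : q ≠ 0) (hq : ‖q‖ < 1)
    {a b : Fin n → ℂ} (hs0 : s ≠ 0)
    (hya : ∀ j, ∀ ν : ℤ, 1 - a j * (y * q ^ ν) ≠ 0)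
    (hsum : ∀ k ≤ n, Summable (mgMomentTerm q s a b y k)) :
    ∑ k ∈ Finset.range (n + 1), (mgRelPoly s a b).coeff k * ∑' ν, mgMomentTerm q s a b y k ν
      = 0 := by
  have hexp (p : Polynomial ℂ) (hp : p.natDegree ≤ n) :
      HasSum (fun ν : ℤ => s ^ ν * mgWeight q a b (y * q ^ ν) * p.eval (y * q ^ ν))
        (∑ k ∈ Finset.range (n + 1), p.coeff k * ∑' ν, mgMomentTerm q s a b y k ν) := by
    have := hasSum_sum (s := Finset.range (n + 1)) fun k hk =>
      ((hsum k (Nat.lt_succ_iff.mp (Finset.mem_range.mp hk))).hasSum.mul_left (p.coeff k))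
    convert! this using 2 with ν
    rw [Polynomial.eval_eq_sum_range' (Nat.lt_succ_of_le hp), Finset.mul_sum]
    refine Finset.sum_congr rfl fun k _ => ?_
    unfold mgMomentTerm
    ring
  have hQ : (∏ j, (1 - Polynomial.C (b j)⁻¹ * Polynomial.X : Polynomial ℂ)).natDegree ≤ n :=
    natDegree_prod_one_sub_le fun j => (b j)⁻¹
  have hG := hexp _ hQ
  set G : ℤ → ℂ := fun ν => s ^ ν * mgWeight q a b (y * q ^ ν) *
    (∏ j, (1 - Polynomial.C (b j)⁻¹ * Polynomial.X : Polynomial ℂ)).eval (y * q ^ ν) with hGdef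
  have hG' := (Equiv.addRight (1 : ℤ)).hasSum_iff.mpr hG
  have hdiff := (hG'.sub hG).mul_left s⁻¹
  rw [sub_self, mul_zero] at hdiff
  refine (hexp _ (natDegree_mgRelPoly_le s a b)).unique ?_
  convert! hdiff using 2 with ν
  have hw := mgWeight_shift hq a b (y * q ^ ν) fun j => hya j ν
  have e : y * q ^ (ν + 1) = q * (y * q ^ ν) := by rw [zpow_add_one₀ hq0]; ring
  simp only [hGdef, Function.comp_apply, Equiv.coe_addRight, mgRelPoly, Polynomial.eval_sub,
    Polynomial.eval_mul, Polynomial.eval_prod, Polynomial.eval_one, Polynomial.eval_C,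
    Polynomial.eval_X, e, zpow_add_one₀ hs0]
  have hss : s * s⁻¹ = 1 := mul_inv_cancel₀ hs0
  linear_combination (-(s ^ ν)) * hw - s ^ ν * mgWeight q a b (q * (y * q ^ ν)) *
    (∏ j, (1 - (b j)⁻¹ * (q * (y * q ^ ν)))) * hss

/-! ### The multiple sum as a determinant of moments -/

/-- The multiple sum with Vandermonde factor and extra weight `∏_i z_i^e` is the determinant of the
moments `J_{k+e}(y_i)`. Here `e = 0` gives the sum at `s` and `e = 1` the sum at `q s`. -/
lemma hasSum_det_mgMoment {n : ℕ} {q s : ℂ} {a b y : Fin n → ℂ} (e : ℕ)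
    (hsum : ∀ i, ∀ k < n, Summable (mgMomentTerm q s a b (y i) (k + e))) :
    HasSum (fun ν : Fin n → ℤ =>
        (∏ i, (s ^ ν i * mgWeight q a b (y i * q ^ ν i) * (y i * q ^ ν i) ^ e)) *
          ∏ i, ∏ j ∈ Finset.Ioi i, (y j * q ^ ν j - y i * q ^ ν i))
      (Matrix.of fun i k : Fin n => ∑' ν, mgMomentTerm q s a b (y i) (k + e) ν).det := by
  have key := hasSum_sum (s := Finset.univ) fun (σ : Equiv.Perm (Fin n)) _ =>
    ((hasSum_pi_prod (fun i => mgMomentTerm q s a b (y i) ((σ i : ℕ) + e))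
      fun i => (hsum i (σ i) (σ i).isLt).norm).2.mul_left ((Equiv.Perm.sign σ : ℤ) : ℂ))
  rw [← Matrix.det_transpose, Matrix.det_apply']
  convert! key using 2 with ν
  rw [← Matrix.det_vandermonde fun i => y i * q ^ ν i, ← Matrix.det_transpose,
    Matrix.det_apply', Finset.mul_sum]
  refine Finset.sum_congr rfl fun σ _ => ?_
  rw [mul_left_comm, ← Finset.prod_mul_distrib]
  congr 1
  refine Finset.prod_congr rfl fun i _ => ?_
  rw [Matrix.transpose_apply, Matrix.vandermonde_apply, mgMomentTerm]
  ring

/-- The summand in terms of the one-variable weights. The sign accounts for the Vandermonde product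
being taken over `z_j - z_i` on the right. -/
lemma mgDualTerm_eq {n : ℕ} {q s : ℂ} (hs0 : s ≠ 0) (a b y : Fin n → ℂ) (ν : Fin n → ℤ) :
    mgDualTerm q s a b y ν = (∏ i : Fin n, ∏ _j ∈ Finset.Ioi i, (-1 : ℂ)) *
      ((∏ i, (s ^ ν i * mgWeight q a b (y i * q ^ ν i))) *
        ∏ i, ∏ j ∈ Finset.Ioi i, (y j * q ^ ν j - y i * q ^ ν i)) := by
  have h : ∏ i, ∏ j ∈ Finset.Ioi i, (y i * q ^ ν i - y j * q ^ ν j) =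
      (∏ i : Fin n, ∏ _j ∈ Finset.Ioi i, (-1 : ℂ)) *
        ∏ i, ∏ j ∈ Finset.Ioi i, (y j * q ^ ν j - y i * q ^ ν i) := by
    rw [← Finset.prod_mul_distrib]
    refine Finset.prod_congr rfl fun i _ => ?_
    rw [← Finset.prod_mul_distrib]
    exact Finset.prod_congr rfl fun j _ => by ring
  have hpow : s ^ (∑ i, ν i) = ∏ i, s ^ ν i := by
    induction (Finset.univ : Finset (Fin n)) using Finset.induction_on with
    | empty => simp
    | insert i t hi ih => rw [Finset.sum_insert hi, Finset.prod_insert hi, zpow_add₀ hs0, ih]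
  rw [mgDualTerm, h, hpow, Finset.prod_mul_distrib]
  simp only [mgWeight]
  ring

/-- Recurrence for the dual Milne–Gustafson sum. -/
theorem milne_gustafson_dual_recurrence
    (q : ℝ) (hq0 : 0 < q) (hq1 : q < 1) (n : ℕ) (hn : 1 ≤ n)
    (a b : Fin n → ℂ) (ha : ∀ i, a i ≠ 0) (hb : ∀ i, b i ≠ 0)
    (s : ℂ) (hs0 : s ≠ 0)
    (y : Fin n → ℂ) (hy : ∀ i, y i ≠ 0)
    (hlow : ‖(∏ i, a i)⁻¹ * (∏ i, b i)⁻¹‖ < ‖s‖) (hupp : ‖s‖ < 1)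
    (hya : ∀ i j, ∀ m : ℤ, y i * a j ≠ (q : ℂ) ^ m) :
    mgDualSum (q : ℂ) s a b y =
      (1 - s * (∏ i, a i) * ∏ i, b i) / ((∏ i, b i) * (1 - s)) *
        (∏ i, y i) * mgDualSum (q : ℂ) ((q : ℂ) * s) a b y := by
  have hqc : (q : ℂ) ≠ 0 := by exact_mod_cast hq0.ne'
  have hqn : ‖(q : ℂ)‖ < 1 := by rwa [Complex.norm_real, Real.norm_of_nonneg hq0.le]
  have hpole : ∀ i j, ∀ ν : ℤ, 1 - a j * (y i * (q : ℂ) ^ ν) ≠ 0 := by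
    intro i j ν h
    apply hya i j (-ν)
    rw [zpow_neg]
    refine eq_inv_of_mul_eq_one_left ?_
    linear_combination -h
  have hsum : ∀ i, ∀ k ≤ n, Summable (mgMomentTerm (q : ℂ) s a b (y i) k) := fun i k hk =>
    summable_mgMomentTerm hqc hqn ha hs0 (hy i) hlow hupp (hpole i) hk
  have h0 := hasSum_det_mgMoment (y := y) 0 fun i k hk => hsum i (k + 0) (by omega)
  have h1 := hasSum_det_mgMoment (y := y) 1 fun i k hk => hsum i (k + 1) hk
  simp only [pow_zero, mul_one, add_zero] at h0
  have hdet : (mgRelPoly s a b).coeff 0 *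
      (Matrix.of fun i k : Fin n => ∑' ν, mgMomentTerm (q : ℂ) s a b (y i) k ν).det =
      (-1) ^ n * (mgRelPoly s a b).coeff n *
        (Matrix.of fun i k : Fin n => ∑' ν, mgMomentTerm (q : ℂ) s a b (y i) (k + 1) ν).det := by
    have hrel := fun i => mgMoment_relation hqc hqn hs0 (hpole i) (hsum i)
    obtain ⟨m, rfl⟩ : ∃ m, n = m + 1 := ⟨n - 1, by omega⟩
    exact det_shift (fun k i => ∑' ν, mgMomentTerm (q : ℂ) s a b (y i) k ν) _ hrel
  rw [coeff_zero_mgRelPoly, coeff_top_mgRelPoly, ← h0.tsum_eq, ← h1.tsum_eq] at hdet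
  have hI0 : mgDualSum (q : ℂ) s a b y = (1 - (q : ℂ)) ^ n *
      ((∏ i : Fin n, ∏ _j ∈ Finset.Ioi i, (-1 : ℂ)) * ∑' ν : Fin n → ℤ,
        (∏ i, (s ^ ν i * mgWeight (q : ℂ) a b (y i * (q : ℂ) ^ ν i))) *
          ∏ i, ∏ j ∈ Finset.Ioi i, (y j * (q : ℂ) ^ ν j - y i * (q : ℂ) ^ ν i)) := by
    rw [mgDualSum, ← tsum_mul_left (a := ∏ i : Fin n, ∏ _j ∈ Finset.Ioi i, (-1 : ℂ))]
    exact congrArg _ (tsum_congr fun ν => mgDualTerm_eq hs0 a b y ν)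
  have hI1 : (∏ i, y i) * mgDualSum (q : ℂ) (q * s) a b y = (1 - (q : ℂ)) ^ n *
      ((∏ i : Fin n, ∏ _j ∈ Finset.Ioi i, (-1 : ℂ)) * ∑' ν : Fin n → ℤ,
        (∏ i, (s ^ ν i * mgWeight (q : ℂ) a b (y i * (q : ℂ) ^ ν i) * (y i * (q : ℂ) ^ ν i) ^ 1)) *
          ∏ i, ∏ j ∈ Finset.Ioi i, (y j * (q : ℂ) ^ ν j - y i * (q : ℂ) ^ ν i)) := by
    rw [mgDualSum, mul_left_comm, ← tsum_mul_left (a := ∏ i, y i),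
      ← tsum_mul_left (a := ∏ i : Fin n, ∏ _j ∈ Finset.Ioi i, (-1 : ℂ))]
    refine congrArg _ (tsum_congr fun ν => ?_)
    rw [mgDualTerm_eq (mul_ne_zero hqc hs0), mul_left_comm, ← mul_assoc (∏ i, y i),
      ← Finset.prod_mul_distrib]
    congr 2
    refine Finset.prod_congr rfl fun i _ => ?_
    -- `y (q s)^ν = s^ν (y q^ν)`: the prefactor `y_i` and the shift of `s` combine into `z_i`.
    rw [mul_zpow]
    ring
  have hsne : 1 - s ≠ 0 := by
    intro h
    rw [← sub_eq_zero.mp h, norm_one] at hupp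
    exact lt_irrefl _ hupp
  have hB : ∏ i, b i ≠ 0 := Finset.prod_ne_zero_iff.mpr fun i _ => hb i
  rw [mul_assoc, hI0, hI1]
  generalize (∑' ν : Fin n → ℤ, _ : ℂ) = T0 at hdet ⊢
  generalize (∑' ν : Fin n → ℤ, _ : ℂ) = T1 at hdet ⊢
  have hsign : ((-1 : ℂ) ^ n) * (-1) ^ n = 1 := by rw [← mul_pow]; simp
  rw [← mul_assoc, hsign, one_mul] at hdet
  have hT : T0 = (1 - s * (∏ i, a i) * ∏ i, b i) / ((∏ i, b i) * (1 - s)) * T1 := by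
    rw [div_mul_eq_mul_div, eq_div_iff (mul_ne_zero hB hsne)]
    field_simp at hdet
    linear_combination -hdet
  rw [hT]
  ring
end
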